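/- Let A = Λ(x₁, x₂, x₃, z₁₂, z₁₃, z₂₃) be the exterior algebra over ℚ on six generators, with the derivation d determined by dxᵢ = 0 and dz_{ij} = xᵢ∧x_j for 1 ≤ i < j ≤ 3. Then d∘d = 0 and the total dimension of H(A, d) over ℚ equals 36. -/

import Mathlib

noncomputable section

/-- The exterior algebra over `ℚ` on six generators `x₁, x₂, x₃, z₁₂, z₁₃, z₂₃`
(all odd). -/
abbrev A6 : Type := ExteriorAlgebra ℚ (Fin 6 → ℚ)

/-- The six generators: `x₁ = gen6 0`, `x₂ = gen6 1`, `x₃ = gen6 2`,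
`z₁₂ = gen6 3`, `z₁₃ = gen6 4`, `z₂₃ = gen6 5`. -/
def gen6 (i : Fin 6) : A6 := ExteriorAlgebra.ι ℚ (Pi.single i 1)

/-- The `i`-th graded piece of the exterior algebra, as a submodule. -/
def grade6 (i : ℕ) : Submodule ℚ A6 :=
  LinearMap.range (ExteriorAlgebra.ι ℚ : (Fin 6 → ℚ) →ₗ[ℚ] A6) ^ i

/-- The total dimension of the cohomology `ker d / im d` of `(V, d)`. -/
def cohomDim {V : Type} [AddCommGroup V] [Module ℚ V] (d : V →ₗ[ℚ] V) : ℕ :=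
  Module.finrank ℚ
    (↥(LinearMap.ker d) ⧸ (LinearMap.range d).comap (LinearMap.ker d).subtype)

/-! Write `V = U ⊕ W`, where `x₁, x₂, x₃` span `U` and the `z_{ij}` span `W`, and let `ω` generate
`Λ³U`. Since `U × Λ²U → Λ³U` is a perfect pairing, `W` has a basis dual to `x₁, x₂, x₃`, and the
derivation satisfies `xₖ ∧ dβ = ω ∧ ∂ₖβ` for `β ∈ Λ W`, where `∂ₖ` is the contraction in the `k`-th
dual coordinate. Moreover `xₖ ∧ xₗ ∧ da = 0` for every `a`, so the filtration of `Λ V` by powers of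
`U` gives `im d = d(Λ W) ⊕ ω ∧ ∑ₖ ∂ₖ(Λ W)`. The sum is direct since `xₖ ∧ ω = 0` and `⋂ₖ ker ∂ₖ`
consists of the scalars, which are also the kernel of `d` on `Λ W`, while `∑ₖ ∂ₖ(Λ W)` is everything
below the top degree; so `rank d = 2(2³ - 1) = 14` and `dim H = 64 - 2 · 14 = 36`. -/

open Module
open CliffordAlgebra (contractLeft)
open ExteriorAlgebra (ι)

section Contraction

variable {R M N I : Type*} [CommRing R] [AddCommGroup M] [Module R M] [AddCommGroup N] [Module R N]

lemma ι_mul_ι_mul_swap (u v : M) (a : ExteriorAlgebra R M) :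
    ι R u * (ι R v * a) = -(ι R v * (ι R u * a)) := by
  rw [← mul_assoc, eq_neg_of_add_eq_zero_left (ExteriorAlgebra.ι_add_mul_swap u v), neg_mul,
    mul_assoc]

lemma contractLeft_map_eq_zero {f : Dual R N} {g : M →ₗ[R] N} (h : f ∘ₗ g = 0)
    (a : ExteriorAlgebra R M) : contractLeft f (ExteriorAlgebra.map g a) = 0 := by
  induction a using CliffordAlgebra.left_induction with
  | algebraMap r => rw [AlgHom.commutes, CliffordAlgebra.contractLeft_algebraMap]
  | add a b ha hb => rw [map_add, map_add, ha, hb, add_zero]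
  | ι_mul a v ha =>
    have hv : f (g v) = 0 := LinearMap.congr_fun h v
    rw [map_mul, ExteriorAlgebra.map_apply_ι, CliffordAlgebra.contractLeft_ι_mul, ha, hv,
      zero_smul, mul_zero, sub_zero]

lemma contractLeft_ι_mul_eq_self {f : Dual R M} {v : M} {a : ExteriorAlgebra R M} (hv : f v = 1)
    (ha : contractLeft f a = 0) : contractLeft f (ι R v * a) = a := by
  rw [CliffordAlgebra.contractLeft_ι_mul, hv, ha, one_smul, mul_zero, sub_zero]

lemma contractLeft_ι_mul_eq_zero {f : Dual R M} {v : M} {a : ExteriorAlgebra R M} (hv : f v = 0)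
    (ha : contractLeft f a = 0) : contractLeft f (ι R v * a) = 0 := by
  rw [CliffordAlgebra.contractLeft_ι_mul, hv, ha, zero_smul, mul_zero, sub_zero]

lemma eq_zero_of_ι_mul_eq_zero {f : Dual R M} {v : M} {a : ExteriorAlgebra R M} (hv : f v = 1)
    (ha : contractLeft f a = 0) (h : ι R v * a = 0) : a = 0 := by
  rw [← contractLeft_ι_mul_eq_self hv ha, h, map_zero]

lemma contractLeft_ιMulti_mul_eq_zero {n : ℕ} {f : Dual R M} {v : Fin n → M}
    {a : ExteriorAlgebra R M} (hv : ∀ i, f (v i) = 0) (ha : contractLeft f a = 0) :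
    contractLeft f (ExteriorAlgebra.ιMulti R n v * a) = 0 := by
  induction n with
  | zero => rwa [ExteriorAlgebra.ιMulti_zero_apply, one_mul]
  | succ n ih =>
    rw [ExteriorAlgebra.ιMulti_succ_apply, mul_assoc]
    exact contractLeft_ι_mul_eq_zero (hv 0) (ih fun i => hv i.succ)

lemma eq_zero_of_ιMulti_mul_eq_zero {n : ℕ} {f : Fin n → Dual R M} {v : Fin n → M}
    {a : ExteriorAlgebra R M} (hv : ∀ i j, f i (v j) = if i = j then 1 else 0)
    (ha : ∀ i, contractLeft (f i) a = 0) (h : ExteriorAlgebra.ιMulti R n v * a = 0) : a = 0 := by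
  induction n with
  | zero => rwa [ExteriorAlgebra.ιMulti_zero_apply, one_mul] at h
  | succ n ih =>
    rw [ExteriorAlgebra.ιMulti_succ_apply, mul_assoc] at h
    refine ih (fun i j => ?_) (fun i => ha i.succ) (eq_zero_of_ι_mul_eq_zero (by simp [hv])
      (contractLeft_ιMulti_mul_eq_zero (fun i => ?_) (ha 0)) h)
    · exact (hv i.succ j.succ).trans (by simp)
    · exact (hv 0 i.succ).trans (if_neg (Fin.succ_ne_zero i).symm)

lemma eq_zero_of_ιMulti_mul_map_eq_zero {n : ℕ} {f : Fin n → Dual R N} {v : Fin n → N}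
    {g : M →ₗ[R] N} {a : ExteriorAlgebra R M} (hg : ∃ r, r ∘ₗ g = LinearMap.id)
    (hv : ∀ i j, f i (v j) = if i = j then 1 else 0) (hfg : ∀ i, f i ∘ₗ g = 0)
    (h : ExteriorAlgebra.ιMulti R n v * ExteriorAlgebra.map g a = 0) : a = 0 :=
  ExteriorAlgebra.map_injective hg
    ((eq_zero_of_ιMulti_mul_eq_zero hv (fun i => contractLeft_map_eq_zero (hfg i) a) h).trans
      (map_zero _).symm)

lemma ι_mul_ιMulti (u : M) {n : ℕ} (v : Fin n → M) :
    ι R u * ExteriorAlgebra.ιMulti R n v =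
      (-1 : R) ^ n • (ExteriorAlgebra.ιMulti R n v * ι R u) := by
  induction n with
  | zero => simp
  | succ n ih =>
    rw [ExteriorAlgebra.ιMulti_succ_apply, ι_mul_ι_mul_swap, ih, mul_smul_comm, pow_succ,
      mul_neg_one, neg_smul, mul_assoc]

lemma ι_mul_ιMulti_self {n : ℕ} (v : Fin n → M) (k : Fin n) :
    ι R (v k) * ExteriorAlgebra.ιMulti R n v = 0 := by
  have h := (ExteriorAlgebra.ιMulti_succ_apply (R := R) (v := Fin.cons (v k) v)).symm
  rw [← (ExteriorAlgebra.ιMulti R (n + 1)).map_eq_zero_of_eq (Fin.cons (v k) v) (i := 0)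
    (j := k.succ) (by simp) (Fin.succ_ne_zero k).symm]
  exact h

/-- The pairing `U × Λ²U → Λ³U` is perfect for `U` of rank three. -/
lemma ι_mul_complementary_ι_mul_ι (v : Fin 3 → M) (k l : Fin 3) :
    ι R (v k) * ![ι R (v 1) * ι R (v 2), -(ι R (v 0) * ι R (v 2)), ι R (v 0) * ι R (v 1)] l =
      if k = l then ExteriorAlgebra.ιMulti R 3 v else 0 := by
  have hsq (i j : Fin 3) : ι R (v i) * (ι R (v i) * ι R (v j)) = 0 := by
    rw [← mul_assoc, ExteriorAlgebra.ι_sq_zero, zero_mul]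
  have hswap (i j : Fin 3) : ι R (v i) * ι R (v j) = -(ι R (v j) * ι R (v i)) :=
    eq_neg_of_add_eq_zero_left (ExteriorAlgebra.ι_add_mul_swap _ _)
  have hswap₃ (i j k : Fin 3) := ι_mul_ι_mul_swap (v i) (v j) (ι R (v k))
  fin_cases k <;> fin_cases l <;>
    simp [ExteriorAlgebra.ιMulti_succ_apply, hsq, hswap 2 1, hswap₃ 1 0, hswap₃ 2 0, hswap₃ 2 1,
      Matrix.vecTail]

variable [LinearOrder I] (b : Basis I R M)

lemma exteriorAlgebra_basis_empty : b.ExteriorAlgebra ∅ = 1 := by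
  rw [ExteriorAlgebra.basis_apply_ofCard b Finset.card_empty]
  exact ExteriorAlgebra.ιMulti_zero_apply _

lemma exteriorAlgebra_basis_singleton (k : I) : b.ExteriorAlgebra {k} = ι R (b k) := by
  rw [ExteriorAlgebra.basis_apply_ofCard b (Finset.card_singleton k)]
  simp [ExteriorAlgebra.ιMulti_succ_apply, Set.powersetCard.ofFinEmbEquiv_symm_apply]

lemma exists_ι_mul_exteriorAlgebra_basis_eq_smul {k : I} {s : Finset I} (hk : k ∉ s) :
    ∃ u : ℤˣ, ι R (b k) * b.ExteriorAlgebra s = u • b.ExteriorAlgebra (insert k s) := by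
  have hdisj : Disjoint {k} s := Finset.disjoint_singleton_left.2 hk
  have hmul := ExteriorAlgebra.basis_mul_of_disjoint b ⟨{k}, Finset.card_singleton k⟩ ⟨s, rfl⟩ hdisj
  rw [Set.powersetCard.coe_disjUnion, Finset.disjUnion_eq_union, ← Finset.insert_eq,
    exteriorAlgebra_basis_singleton] at hmul
  exact ⟨_, hmul⟩

lemma contractLeft_coord_exteriorAlgebra_basis {k : I} {s : Finset I} (hk : k ∉ s) :
    contractLeft (b.coord k) (b.ExteriorAlgebra s) = 0 := by
  rw [ExteriorAlgebra.basis_apply_ofCard b rfl, ExteriorAlgebra.ιMulti_family,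
    ← mul_one (ExteriorAlgebra.ιMulti _ _ _)]
  refine contractLeft_ιMulti_mul_eq_zero (fun i => ?_) (CliffordAlgebra.contractLeft_one _ _)
  have hi : s.orderEmbOfFin rfl i ≠ k := ne_of_mem_of_not_mem (s.orderEmbOfFin_mem rfl i) hk
  exact (b.repr_self_apply _ _).trans (if_neg hi)

lemma range_contractLeft_coord (k : I) :
    LinearMap.range (contractLeft (Q := 0) (b.coord k)) =
      Submodule.span R (b.ExteriorAlgebra '' {s | k ∉ s}) := by
  have hself (s : Finset I) (hs : k ∉ s) :
      contractLeft (b.coord k) (ι R (b k) * b.ExteriorAlgebra s) = b.ExteriorAlgebra s :=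
    contractLeft_ι_mul_eq_self (by simp) (contractLeft_coord_exteriorAlgebra_basis b hs)
  apply le_antisymm
  · rw [LinearMap.range_eq_map, ← b.ExteriorAlgebra.span_eq, Submodule.map_span_le]
    rintro _ ⟨s, rfl⟩
    by_cases hs : k ∈ s
    · obtain ⟨u, hu⟩ := exists_ι_mul_exteriorAlgebra_basis_eq_smul b (s.notMem_erase k)
      rw [Finset.insert_erase hs, eq_comm, ← eq_inv_smul_iff] at hu
      rw [hu, Units.smul_def, map_zsmul, hself _ (s.notMem_erase k)]
      exact zsmul_mem (Submodule.subset_span (Set.mem_image_of_mem _ (s.notMem_erase k))) _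
    · rw [contractLeft_coord_exteriorAlgebra_basis b hs]
      exact zero_mem _
  · rw [Submodule.span_le]
    rintro _ ⟨s, hs, rfl⟩
    exact LinearMap.mem_range.2 ⟨_, hself s hs⟩

lemma ker_contractLeft_eq_range {f : Dual R M} {v : M} (hv : f v = 1) :
    LinearMap.ker (contractLeft (Q := 0) f) =
      LinearMap.range (contractLeft (Q := 0) f) := by
  apply le_antisymm
  · intro a ha
    exact ⟨_, contractLeft_ι_mul_eq_self hv ha⟩
  · rintro _ ⟨a, rfl⟩
    exact CliffordAlgebra.contractLeft_contractLeft _ a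

lemma iInf_ker_contractLeft_coord :
    ⨅ k, LinearMap.ker (contractLeft (Q := 0) (b.coord k)) = Submodule.span R {1} := by
  have hker (k : I) := (ker_contractLeft_eq_range (f := b.coord k) (v := b k) (by simp)).trans
    (range_contractLeft_coord b k)
  rw [← exteriorAlgebra_basis_empty b, ← Set.image_singleton]
  ext a
  simp only [hker, Submodule.mem_iInf, b.ExteriorAlgebra.mem_span_image, Set.subset_def,
    Set.mem_ofPred_eq, Set.mem_singleton_iff, Finset.eq_empty_iff_forall_notMem]
  exact ⟨fun h s hs k => h k s hs, fun h k s hs => h s hs k⟩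

lemma iSup_range_contractLeft_coord [Fintype I] :
    ⨆ k, LinearMap.range (contractLeft (Q := 0) (b.coord k)) =
      Submodule.span R (b.ExteriorAlgebra '' {Finset.univ}ᶜ) := by
  simp only [range_contractLeft_coord, ← Submodule.span_iUnion, ← Set.image_iUnion]
  congr 2
  ext s
  simp [Finset.eq_univ_iff_forall]

lemma finrank_iSup_range_contractLeft_coord [Fintype I] [Nontrivial R] :
    finrank R ↥(⨆ k, LinearMap.range (contractLeft (Q := 0) (b.coord k))) =
      2 ^ Fintype.card I - 1 := by
  have hli : LinearIndependent R fun s : ({Finset.univ}ᶜ : Set (Finset I)) => b.ExteriorAlgebra s :=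
    b.ExteriorAlgebra.linearIndependent.comp _ Subtype.val_injective
  rw [iSup_range_contractLeft_coord, Set.image_eq_range, finrank_span_eq_card hli,
    Fintype.card_compl_set, Fintype.card_finset, Set.card_singleton]

lemma finrank_exteriorAlgebra [Nontrivial R] [Module.Free R M] [Module.Finite R M] :
    finrank R (ExteriorAlgebra R M) = 2 ^ finrank R M := by
  rw [finrank_eq_card_basis (finBasis R M).ExteriorAlgebra, Fintype.card_finset, Fintype.card_fin]

end Contraction

section Homology

variable {K V : Type*} [DivisionRing K] [AddCommGroup V] [Module K V]

lemma finrank_homology_add_two_mul_finrank_range [FiniteDimensional K V] {d : V →ₗ[K] V}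
    (hd : d ∘ₗ d = 0) :
    finrank K (↥(LinearMap.ker d) ⧸ (LinearMap.range d).comap (LinearMap.ker d).subtype) +
      2 * finrank K (LinearMap.range d) = finrank K V := by
  have hle : LinearMap.range d ≤ LinearMap.ker d := LinearMap.range_le_ker_iff.2 hd
  have hquot := Submodule.finrank_quotient_add_finrank
    ((LinearMap.range d).comap (LinearMap.ker d).subtype)
  have hrange := (Submodule.comapSubtypeEquivOfLe hle).finrank_eq
  have hnullity := d.finrank_range_add_finrank_ker
  lia

end Homology

section Derivation

variable {R M : Type*} [CommRing R] [AddCommGroup M] [Module R M]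
  {d : ExteriorAlgebra R M →ₗ[R] ExteriorAlgebra R M}

/-- The graded Leibniz rule for an operator of odd degree. -/
def IsOddDerivation (d : ExteriorAlgebra R M →ₗ[R] ExteriorAlgebra R M) : Prop :=
  ∀ (i : ℕ) (a b : ExteriorAlgebra R M), a ∈ ⋀[R]^i M →
    d (a * b) = d a * b + ((-1 : R) ^ i) • (a * d b)

namespace IsOddDerivation

lemma map_one (hd : IsOddDerivation d) : d 1 = 0 := by
  simpa using hd 0 1 1 (by simp)

lemma map_ι_mul (hd : IsOddDerivation d) (v : M) (a : ExteriorAlgebra R M) :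
    d (ι R v * a) = d (ι R v) * a - ι R v * d a := by
  rw [hd 1 _ _ (by simp), pow_one, neg_one_smul, sub_eq_add_neg]

lemma comp_self_eq_zero {I : Type*} (hd : IsOddDerivation d) (b : Basis I R M)
    (hmem : ∀ i, d (ι R (b i)) ∈ ⋀[R]^2 M) (hsq : ∀ i, d (d (ι R (b i))) = 0) : d ∘ₗ d = 0 := by
  have hmem_ι (v : M) : d (ι R v) ∈ ⋀[R]^2 M := by
    have hle : Submodule.span R (Set.range b) ≤ (⋀[R]^2 M).comap (d ∘ₗ ι R) :=
      Submodule.span_le.2 (Set.range_subset_iff.2 hmem)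
    exact hle (b.mem_span v)
  have hsq_ι (v : M) : d (d (ι R v)) = 0 :=
    LinearMap.congr_fun (b.ext hsq : d ∘ₗ d ∘ₗ ι R = 0) v
  refine LinearMap.ext fun a => ?_
  rw [LinearMap.comp_apply, LinearMap.zero_apply]
  induction a using CliffordAlgebra.left_induction with
  | algebraMap r => rw [Algebra.algebraMap_eq_smul_one, map_smul, hd.map_one, smul_zero, map_zero]
  | add a b ha hb => rw [map_add, map_add, ha, hb, add_zero]
  | ι_mul a v ha =>
    have hv : d (d (ι R v) * a) = d (ι R v) * d a := by
      rw [hd 2 _ _ (hmem_ι v), hsq_ι, zero_mul, zero_add, neg_one_sq, one_smul]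
    rw [hd.map_ι_mul, map_sub, hv, hd.map_ι_mul, ha, mul_zero, sub_zero, sub_self]

end IsOddDerivation

end Derivation

section Decomposition

lemma map_span_mul_le {R A N : Type*} [CommSemiring R] [Semiring A] [Algebra R A]
    [AddCommMonoid N] [Module R N] {f : A →ₗ[R] N} {s : Set A} {p : Submodule R A}
    {q : Submodule R N} (h : ∀ a ∈ s, ∀ b ∈ p, f (a * b) ∈ q) :
    (Submodule.span R s * p).map f ≤ q := by
  rw [← p.span_eq, Submodule.span_mul_span, Submodule.map_span_le]
  rintro _ ⟨a, ha, b, hb, rfl⟩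
  exact h a ha b hb

variable {R M N : Type*} [CommRing R] [AddCommGroup M] [Module R M] [AddCommGroup N] [Module R N]

lemma eq_top_of_range_ι_mul_le {p : Submodule R (ExteriorAlgebra R M)} (hone : 1 ∈ p)
    (hmul : LinearMap.range (ι R) * p ≤ p) : p = ⊤ := by
  refine eq_top_iff.2 fun a _ => ?_
  induction a using CliffordAlgebra.left_induction with
  | algebraMap r =>
    rw [Algebra.algebraMap_eq_smul_one]
    exact p.smul_mem r hone
  | add a b ha hb => exact add_mem (ha trivial) (hb trivial)
  | ι_mul a v ha => exact hmul (Submodule.mul_mem_mul ⟨v, rfl⟩ (ha trivial))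

lemma range_map_sup_mul_sup_mul_mul_top {U : Submodule R M} {g : N →ₗ[R] M}
    (hU : U ⊔ LinearMap.range g = ⊤) :
    LinearMap.range (ExteriorAlgebra.map g).toLinearMap ⊔
      U.map (ι R) * LinearMap.range (ExteriorAlgebra.map g).toLinearMap ⊔
      U.map (ι R) * U.map (ι R) * ⊤ = ⊤ := by
  set X := U.map (ι R)
  set Z := (LinearMap.range g).map (ι R)
  set B := LinearMap.range (ExteriorAlgebra.map g).toLinearMap
  set T := B ⊔ X * B ⊔ X * X * ⊤ with hT
  have hZX : Z * X ≤ X * Z := by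
    refine Submodule.mul_le.2 ?_
    rintro _ ⟨w, hw, rfl⟩ _ ⟨u, hu, rfl⟩
    rw [eq_neg_of_add_eq_zero_left (ExteriorAlgebra.ι_add_mul_swap w u)]
    exact neg_mem (Submodule.mul_mem_mul ⟨u, hu, rfl⟩ ⟨w, hw, rfl⟩)
  have hZB : Z * B ≤ B := by
    refine Submodule.mul_le.2 ?_
    rintro _ ⟨_, ⟨w, rfl⟩, rfl⟩ _ ⟨a, rfl⟩
    exact ⟨ι R w * a, by simp⟩
  have hXT : X * T ≤ T := calc
    X * T = X * B ⊔ X * X * B ⊔ X * X * (X * ⊤) := by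
      simp only [hT, Submodule.mul_sup, mul_assoc]
    _ ≤ T := by
      rw [sup_assoc, ← Submodule.mul_sup]
      exact sup_le_sup le_sup_right (mul_le_mul_right le_top _)
  have hZT : Z * T ≤ T := calc
    Z * T = Z * B ⊔ Z * X * B ⊔ Z * X * X * ⊤ := by
      simp only [hT, Submodule.mul_sup, mul_assoc]
    _ ≤ Z * B ⊔ X * Z * B ⊔ X * Z * X * ⊤ := by gcongr
    _ = Z * B ⊔ X * (Z * B) ⊔ X * (Z * X) * ⊤ := by simp only [mul_assoc]
    _ ≤ B ⊔ X * B ⊔ X * (X * Z) * ⊤ := by gcongr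
    _ = B ⊔ X * B ⊔ X * X * (Z * ⊤) := by simp only [mul_assoc]
    _ ≤ T := sup_le_sup_left (mul_le_mul_right le_top _) _
  refine eq_top_of_range_ι_mul_le (Submodule.mem_sup_left (Submodule.mem_sup_left ⟨1, by simp⟩)) ?_
  rw [LinearMap.range_eq_map, ← hU, Submodule.map_sup, Submodule.sup_mul]
  exact sup_le hXT hZT

end Decomposition

/-- Generators adapted to an odd derivation `d` of `Λ V`: the degree-one cocycles `x k` and the
image of `z` span `V`, and `x k ∧ d (z (w l)) = δ_{kl} ω` for the basis `w` of `W`. This is the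
situation of `V = U ⊕ W` with `dim U = 3` and `d : W ≃ Λ²U`: the wedge product `U × Λ²U → Λ³U` is a
perfect pairing, so `W` has a basis dual to one of `U` with respect to the volume form `ω` of `U`.
-/
structure IsDualFrame {R V W I : Type*} [CommRing R] [AddCommGroup V] [Module R V]
    [AddCommGroup W] [Module R W] (d : ExteriorAlgebra R V →ₗ[R] ExteriorAlgebra R V)
    (w : Basis I R W) (x : I → V) (z : W →ₗ[R] V) (ω : ExteriorAlgebra R V) : Prop where
  isOddDerivation : IsOddDerivation d
  map_ι_x : ∀ k, d (ι R (x k)) = 0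
  ι_x_mul_map_ι_z_basis : ∀ k l, ι R (x k) * d (ι R (z (w l))) = w.coord k (w l) • ω
  ι_x_mul_volume : ∀ k, ι R (x k) * ω = 0
  ι_z_mul_volume : ∀ v, ι R (z v) * ω = -(ω * ι R (z v))
  eq_zero_of_volume_mul : ∀ a, ω * ExteriorAlgebra.map z a = 0 → a = 0
  span_sup_range : Submodule.span R (Set.range x) ⊔ LinearMap.range z = ⊤

namespace IsDualFrame

variable {R V W I : Type*} [CommRing R] [AddCommGroup V] [Module R V]
    [AddCommGroup W] [Module R W] {d : ExteriorAlgebra R V →ₗ[R] ExteriorAlgebra R V}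
    {w : Basis I R W} {x : I → V} {z : W →ₗ[R] V} {ω : ExteriorAlgebra R V}

lemma map_ι_x_mul (h : IsDualFrame d w x z ω) (k : I) (a : ExteriorAlgebra R V) :
    d (ι R (x k) * a) = -(ι R (x k) * d a) := by
  rw [h.isOddDerivation.map_ι_mul, h.map_ι_x, zero_mul, zero_sub]

lemma ι_x_mul_map_ι_z (h : IsDualFrame d w x z ω) (k : I) (v : W) :
    ι R (x k) * d (ι R (z v)) = w.coord k v • ω := by
  have hext : LinearMap.mulLeft R (ι R (x k)) ∘ₗ d ∘ₗ ι R ∘ₗ z = (w.coord k).smulRight ω :=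
    w.ext (h.ι_x_mul_map_ι_z_basis k)
  exact LinearMap.congr_fun hext v

lemma ι_x_mul_map_map (h : IsDualFrame d w x z ω) (k : I) (a : ExteriorAlgebra R W) :
    ι R (x k) * d (ExteriorAlgebra.map z a) =
      ω * ExteriorAlgebra.map z (contractLeft (w.coord k) a) := by
  induction a using CliffordAlgebra.left_induction with
  | algebraMap r =>
    rw [CliffordAlgebra.contractLeft_algebraMap, AlgHom.commutes, Algebra.algebraMap_eq_smul_one,
      map_smul, h.isOddDerivation.map_one, smul_zero, mul_zero, map_zero, mul_zero]
  | add a b ha hb => simp only [map_add, mul_add, ha, hb]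
  | ι_mul a v ha =>
    calc ι R (x k) * d (ExteriorAlgebra.map z (ι R v * a))
        = ι R (x k) * d (ι R (z v)) * ExteriorAlgebra.map z a -
            ι R (x k) * (ι R (z v) * d (ExteriorAlgebra.map z a)) := by
          rw [map_mul, ExteriorAlgebra.map_apply_ι, h.isOddDerivation.map_ι_mul, mul_sub, mul_assoc]
      _ = w.coord k v • (ω * ExteriorAlgebra.map z a) +
            ι R (z v) * ω * ExteriorAlgebra.map z (contractLeft (w.coord k) a) := by
          rw [h.ι_x_mul_map_ι_z, ι_mul_ι_mul_swap, ha, sub_neg_eq_add, smul_mul_assoc, mul_assoc]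
      _ = ω * ExteriorAlgebra.map z (contractLeft (w.coord k) (ι R v * a)) := by
          rw [h.ι_z_mul_volume, CliffordAlgebra.contractLeft_ι_mul, map_sub, map_smul, map_mul,
            ExteriorAlgebra.map_apply_ι, mul_sub, mul_smul_comm, neg_mul, mul_assoc, sub_eq_add_neg]

lemma ι_x_mul_ι_x_mul_map (h : IsDualFrame d w x z ω) (k l : I) (a : ExteriorAlgebra R V) :
    ι R (x k) * (ι R (x l) * d a) = 0 := by
  have hgen : ⊤ ≤ LinearMap.ker (LinearMap.mulLeft R (ι R (x k)) ∘ₗ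
      LinearMap.mulLeft R (ι R (x l)) ∘ₗ d ∘ₗ ι R) := by
    rw [← h.span_sup_range, sup_le_iff, Submodule.span_le]
    constructor
    · rintro _ ⟨m, rfl⟩
      simp [h.map_ι_x]
    · rintro _ ⟨v, rfl⟩
      simp [h.ι_x_mul_map_ι_z, h.ι_x_mul_volume]
  induction a using CliffordAlgebra.left_induction with
  | algebraMap r =>
    rw [Algebra.algebraMap_eq_smul_one, map_smul, h.isOddDerivation.map_one, smul_zero, mul_zero,
      mul_zero]
  | add a b ha hb => simp only [map_add, mul_add, ha, hb, add_zero]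
  | ι_mul a v ha =>
    have hv : ι R (x k) * (ι R (x l) * d (ι R v)) = 0 := hgen (Submodule.mem_top (x := v))
    calc ι R (x k) * (ι R (x l) * d (ι R v * a))
        = ι R (x k) * (ι R (x l) * d (ι R v)) * a -
            ι R (x k) * (ι R (x l) * (ι R v * d a)) := by
          rw [h.isOddDerivation.map_ι_mul, mul_sub, mul_sub, mul_assoc, mul_assoc]
      _ = -(ι R v * (ι R (x k) * (ι R (x l) * d a))) := by
          rw [hv, zero_mul, zero_sub, ι_mul_ι_mul_swap (x l) v, mul_neg, ι_mul_ι_mul_swap (x k) v,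
            neg_neg]
      _ = 0 := by rw [ha, mul_zero, neg_zero]

lemma range_eq (h : IsDualFrame d w x z ω) :
    LinearMap.range d = LinearMap.range (d ∘ₗ (ExteriorAlgebra.map z).toLinearMap) ⊔
      (⨆ k, LinearMap.range (contractLeft (Q := 0) (w.coord k))).map
        (LinearMap.mulLeft R ω ∘ₗ (ExteriorAlgebra.map z).toLinearMap) := by
  have hX : (Submodule.span R (Set.range x)).map (ι R) =
      Submodule.span R (Set.range fun k => ι R (x k)) := by
    rw [Submodule.map_span, ← Set.range_comp]
    rfl
  apply le_antisymm
  · rw [LinearMap.range_eq_map, ← range_map_sup_mul_sup_mul_mul_top h.span_sup_range, hX,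
      Submodule.map_sup, Submodule.map_sup, LinearMap.range_comp]
    refine sup_le (sup_le le_sup_left (le_sup_of_le_right ?_)) ?_
    · refine map_span_mul_le ?_
      rintro _ ⟨k, rfl⟩ _ ⟨a, rfl⟩
      refine ⟨-contractLeft (w.coord k) a, neg_mem (Submodule.mem_iSup_of_mem k ⟨a, rfl⟩), ?_⟩
      simp [h.map_ι_x_mul, h.ι_x_mul_map_map]
    · rw [Submodule.span_mul_span]
      refine map_span_mul_le ?_
      rintro _ ⟨_, ⟨k, rfl⟩, _, ⟨l, rfl⟩, rfl⟩ a -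
      simp [mul_assoc, h.map_ι_x_mul, h.ι_x_mul_ι_x_mul_map]
  · rw [sup_le_iff, Submodule.map_iSup, iSup_le_iff]
    refine ⟨LinearMap.range_comp_le_range _ _, fun k => ?_⟩
    rintro _ ⟨_, ⟨a, rfl⟩, rfl⟩
    refine ⟨-(ι R (x k) * ExteriorAlgebra.map z a), ?_⟩
    rw [map_neg, h.map_ι_x_mul, neg_neg, h.ι_x_mul_map_map]
    rfl

variable [LinearOrder I]

lemma forall_ι_x_mul_map_map_eq_zero_iff (h : IsDualFrame d w x z ω) {a : ExteriorAlgebra R W} :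
    (∀ k, ι R (x k) * d (ExteriorAlgebra.map z a) = 0) ↔ a ∈ Submodule.span R {1} := by
  rw [← iInf_ker_contractLeft_coord w, Submodule.mem_iInf]
  refine forall_congr' fun k => ?_
  rw [h.ι_x_mul_map_map, LinearMap.mem_ker]
  exact ⟨h.eq_zero_of_volume_mul _, fun ha => by rw [ha, map_zero, mul_zero]⟩

lemma ker_comp_map (h : IsDualFrame d w x z ω) :
    LinearMap.ker (d ∘ₗ (ExteriorAlgebra.map z).toLinearMap) = Submodule.span R {1} := by
  apply le_antisymm
  · intro a ha
    rw [← h.forall_ι_x_mul_map_map_eq_zero_iff]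
    intro k
    rw [show d (ExteriorAlgebra.map z a) = 0 from ha, mul_zero]
  · rw [Submodule.span_singleton_le_iff_mem]
    simp [h.isOddDerivation.map_one]

lemma disjoint_range (h : IsDualFrame d w x z ω) :
    Disjoint (LinearMap.range (d ∘ₗ (ExteriorAlgebra.map z).toLinearMap))
      (LinearMap.range (LinearMap.mulLeft R ω)) := by
  rw [Submodule.disjoint_def]
  rintro _ ⟨a, rfl⟩ ⟨b, hb⟩
  rw [← LinearMap.mem_ker, h.ker_comp_map, ← h.forall_ι_x_mul_map_map_eq_zero_iff]
  intro k
  rw [← AlgHom.toLinearMap_apply, ← LinearMap.comp_apply d, ← hb, LinearMap.mulLeft_apply,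
    ← mul_assoc, h.ι_x_mul_volume, zero_mul]

end IsDualFrame

lemma IsDualFrame.finrank_range {K V W I : Type*} [Field K] [AddCommGroup V] [Module K V]
    [AddCommGroup W] [Module K W] [LinearOrder I] [Fintype I]
    {d : ExteriorAlgebra K V →ₗ[K] ExteriorAlgebra K V} {w : Basis I K W} {x : I → V}
    {z : W →ₗ[K] V} {ω : ExteriorAlgebra K V} (h : IsDualFrame d w x z ω) :
    finrank K (LinearMap.range d) = 2 * (2 ^ Fintype.card I - 1) := by
  have hfin : FiniteDimensional K W := .of_basis w
  have hfinΛ : FiniteDimensional K (ExteriorAlgebra K W) := .of_basis w.ExteriorAlgebra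
  have hinj : Function.Injective (LinearMap.mulLeft K ω ∘ₗ (ExteriorAlgebra.map z).toLinearMap) :=
    (injective_iff_map_eq_zero _).2 h.eq_zero_of_volume_mul
  have hnullity := (d ∘ₗ (ExteriorAlgebra.map z).toLinearMap).finrank_range_add_finrank_ker
  rw [h.ker_comp_map, finrank_span_singleton one_ne_zero, finrank_exteriorAlgebra,
    finrank_eq_card_basis w] at hnullity
  have hle : (⨆ k, LinearMap.range (contractLeft (Q := 0) (w.coord k))).map
      (LinearMap.mulLeft K ω ∘ₗ (ExteriorAlgebra.map z).toLinearMap) ≤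
        LinearMap.range (LinearMap.mulLeft K ω) :=
    LinearMap.map_le_range.trans (LinearMap.range_comp_le_range _ _)
  have hsup := Submodule.finrank_sup_add_finrank_inf_eq
    (LinearMap.range (d ∘ₗ (ExteriorAlgebra.map z).toLinearMap))
    ((⨆ k, LinearMap.range (contractLeft (Q := 0) (w.coord k))).map
      (LinearMap.mulLeft K ω ∘ₗ (ExteriorAlgebra.map z).toLinearMap))
  rw [(h.disjoint_range.mono_right hle).eq_bot, finrank_bot, ← h.range_eq,
    ← (Submodule.equivMapOfInjective _ hinj _).finrank_eq,
    finrank_iSup_range_contractLeft_coord] at hsup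
  lia

lemma isDualFrame_of_basis {R V : Type*} [CommRing R] [AddCommGroup V] [Module R V]
    {d : ExteriorAlgebra R V →ₗ[R] ExteriorAlgebra R V} (b : Basis (Fin 6) R V)
    (hd : IsOddDerivation d)
    (hx₁ : d (ι R (b 0)) = 0) (hx₂ : d (ι R (b 1)) = 0) (hx₃ : d (ι R (b 2)) = 0)
    (hz₁₂ : d (ι R (b 3)) = ι R (b 0) * ι R (b 1))
    (hz₁₃ : d (ι R (b 4)) = ι R (b 0) * ι R (b 2))
    (hz₂₃ : d (ι R (b 5)) = ι R (b 1) * ι R (b 2)) :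
    IsDualFrame d (Pi.basisFun R (Fin 3)) ![b 0, b 1, b 2]
      (Fintype.linearCombination R ![b 5, -b 4, b 3])
      (ExteriorAlgebra.ιMulti R 3 ![b 0, b 1, b 2]) where
  isOddDerivation := hd
  map_ι_x k := by fin_cases k <;> assumption
  ι_x_mul_map_ι_z_basis k l := by
    have hz : d (ι R (Fintype.linearCombination R ![b 5, -b 4, b 3] (Pi.basisFun R (Fin 3) l))) =
        ![ι R (b 1) * ι R (b 2), -(ι R (b 0) * ι R (b 2)), ι R (b 0) * ι R (b 1)] l := by
      fin_cases l <;> simp [Fintype.linearCombination_apply_single, hz₁₂, hz₁₃, hz₂₃]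
    rw [hz]
    refine (ι_mul_complementary_ι_mul_ι ![b 0, b 1, b 2] k l).trans ?_
    simp [Pi.single_apply]
  ι_x_mul_volume := ι_mul_ιMulti_self _
  ι_z_mul_volume v := by rw [ι_mul_ιMulti, Odd.neg_one_pow (by decide), neg_one_smul]
  eq_zero_of_volume_mul a ha := by
    have hinv : LinearMap.pi ![b.coord 5, -b.coord 4, b.coord 3] ∘ₗ
        Fintype.linearCombination R ![b 5, -b 4, b 3] = LinearMap.id := by
      refine (Pi.basisFun R (Fin 3)).ext fun l => funext fun k => ?_
      fin_cases k <;> fin_cases l <;> simp [Fintype.linearCombination_apply_single]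
    refine eq_zero_of_ιMulti_mul_map_eq_zero (f := ![b.coord 0, b.coord 1, b.coord 2]) ⟨_, hinv⟩
      (fun i j => ?_) (fun i => (Pi.basisFun R (Fin 3)).ext fun l => ?_) ha
    · fin_cases i <;> fin_cases j <;> simp
    · fin_cases i <;> fin_cases l <;> simp [Fintype.linearCombination_apply_single]
  span_sup_range := by
    rw [Fintype.range_linearCombination, ← Submodule.span_union, eq_top_iff, ← b.span_eq,
      Submodule.span_le]
    rintro _ ⟨i, rfl⟩
    fin_cases i
    exacts [Submodule.subset_span (.inl ⟨0, rfl⟩), Submodule.subset_span (.inl ⟨1, rfl⟩),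
      Submodule.subset_span (.inl ⟨2, rfl⟩), Submodule.subset_span (.inr ⟨2, rfl⟩),
      neg_mem_iff.1 (Submodule.subset_span (.inr ⟨1, rfl⟩)),
      Submodule.subset_span (.inr ⟨0, rfl⟩)]

theorem stmt_2_general {K V : Type*} [Field K] [AddCommGroup V] [Module K V]
    {d : ExteriorAlgebra K V →ₗ[K] ExteriorAlgebra K V} (b : Basis (Fin 6) K V)
    (hd : IsOddDerivation d)
    (hx₁ : d (ι K (b 0)) = 0) (hx₂ : d (ι K (b 1)) = 0) (hx₃ : d (ι K (b 2)) = 0)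
    (hz₁₂ : d (ι K (b 3)) = ι K (b 0) * ι K (b 1))
    (hz₁₃ : d (ι K (b 4)) = ι K (b 0) * ι K (b 2))
    (hz₂₃ : d (ι K (b 5)) = ι K (b 1) * ι K (b 2)) :
    d ∘ₗ d = 0 ∧
      finrank K (↥(LinearMap.ker d) ⧸ (LinearMap.range d).comap (LinearMap.ker d).subtype) =
        36 := by
  have hmem (u v : V) : ι K u * ι K v ∈ ⋀[K]^2 V :=
    ExteriorAlgebra.ιMulti_range K 2 ⟨![u, v], by simp [ExteriorAlgebra.ιMulti_apply]⟩
  have hsq : d ∘ₗ d = 0 := by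
    refine hd.comp_self_eq_zero b (fun i => ?_) (fun i => ?_) <;> fin_cases i <;>
      simp [hx₁, hx₂, hx₃, hz₁₂, hz₁₃, hz₂₃, hmem, hd.map_ι_mul]
  have hframe := isDualFrame_of_basis b hd hx₁ hx₂ hx₃ hz₁₂ hz₁₃ hz₂₃
  have hfin : FiniteDimensional K V := .of_basis b
  have hfinΛ : FiniteDimensional K (ExteriorAlgebra K V) := .of_basis b.ExteriorAlgebra
  have hcount := finrank_homology_add_two_mul_finrank_range hsq
  simp only [hframe.finrank_range, finrank_exteriorAlgebra, finrank_eq_card_basis b,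
    Fintype.card_fin] at hcount
  exact ⟨hsq, by lia⟩

/-- For `Λ(x₁,x₂,x₃,z₁₂,z₁₃,z₂₃)` over `ℚ` with the derivation `d xᵢ = 0`, `d z_{ij} = xᵢ ∧ x_j`, we have `d ∘ d = 0` and `dim H(A, d) = 36`. -/
theorem stmt_2 (d : A6 →ₗ[ℚ] A6)
    (hleibniz : ∀ (i : ℕ) (a b : A6), a ∈ grade6 i →
      d (a * b) = d a * b + ((-1 : ℚ) ^ i) • (a * d b))
    (hx1 : d (gen6 0) = 0) (hx2 : d (gen6 1) = 0) (hx3 : d (gen6 2) = 0)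
    (hz12 : d (gen6 3) = gen6 0 * gen6 1)
    (hz13 : d (gen6 4) = gen6 0 * gen6 2)
    (hz23 : d (gen6 5) = gen6 1 * gen6 2) :
    d ∘ₗ d = 0 ∧ cohomDim d = 36 :=
  stmt_2_general (Pi.basisFun ℚ (Fin 6)) hleibniz (by simpa [gen6] using hx1)
    (by simpa [gen6] using hx2) (by simpa [gen6] using hx3) (by simpa [gen6] using hz12)
    (by simpa [gen6] using hz13) (by simpa [gen6] using hz23)
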